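/- Let T' = (t'_k) and T⋆ = (t⋆_k) be admissible event sequences satisfying the asynchrony bounds with parameters τ', τ⋆, τ°, τ♮, let Δ be the associated asynchronous sample-and-hold perturbation operator, and let β = (2(τ' + τ°)/π + √((τ' + τ°)τ♮))². Then for every α ∈ [0,1], the scaled operator αΔ satisfies the same integral quadratic constraint family: for all real numbers X ≥ 0 and Y ≥ 0 and all v ∈ L²([0,∞)), (βX + τ♮Y)‖v‖² + 2Y⟨αΔv, v⟩ − X‖αΔv‖² ≥ 0. -/

import Mathlib

/-!
The times at which the held sample changes cut `[0, ∞)` into hold intervals `[F i, F (i + 1))`, on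
each of which the output is `z t = ∫_{S i}^t v` for a sampling time `S i ≤ F i`
(`holdPattern`, `qIdx_eq`). The asynchrony bounds give `F i - S i ≤ τ♮` and
`F (i + 1) - S i ≤ L := τ' + τ°`, and `F i ≤ S (i + 1)`, so the windows `[S i, F i]` do not overlap.

* Gain (`HoldPattern.gain`). Split `z` into the constant `∫_{S i}^{F i} v` and `∫_{F i}^t v`. By
  Cauchy–Schwarz the first has gain `√(L τ♮)`, relative to the energy of `v` on `[S i, F i]`. By
  Wirtinger's inequality with one free end (`wirtinger`) the second has gain `2 L / π`. Adding up
  over `i` yields `‖Δ v‖² ≤ β ‖v‖²`.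
* Passivity (`HoldPattern.passive`). As `z' = v` almost everywhere, `2 ∫ z v` over a hold interval
  is at least `-z(F i)²`, and `z(F i)² ≤ τ♮ ∫_{S i}^{F i} v²`. Adding up yields
  `2 ⟨Δ v, v⟩ ≥ -τ♮ ‖v‖²`.

Both bounds pass to `α Δ` because `0 ≤ α ≤ 1`, and their combination with weights `X` and `Y` is
the claim. Since `v` is only square integrable, calculus on `z` rests on absolute continuity
(`integral_deriv_mul_primitive_sq`). Square integrability of `Δ v` is never needed: the two bounds
are proved on `[0, F N]` and passed to the limit when the integrand is integrable, and otherwise the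
integral is `0` by convention and the bounds are trivial.
-/

open MeasureTheory Filter Set

/-- An admissible event sequence: `T 0 = 0`, strictly increasing, tending to `+∞`. -/
def Admissible (T : ℕ → ℝ) : Prop :=
  T 0 = 0 ∧ (∀ k, T k < T (k + 1)) ∧ Tendsto T atTop atTop

/-- `lastIdx T t = max {k | T k ≤ t}`. -/
noncomputable def lastIdx (T : ℕ → ℝ) (t : ℝ) : ℕ := sSup {k | T k ≤ t}

/-- `q(t) = p(t⋆_{n(t)})`: index of the sample held at the most recent hold update. -/
noncomputable def qIdx (Tp Ts : ℕ → ℝ) (t : ℝ) : ℕ := lastIdx Tp (Ts (lastIdx Ts t))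

/-- `φ_k = min {t⋆_j | t⋆_j ≥ t'_k}`, the first hold update at or after sample `k`. -/
noncomputable def phi (Tp Ts : ℕ → ℝ) (k : ℕ) : ℝ := Ts (sInf {j | Tp k ≤ Ts j})

/-- The asynchrony bounds (3) on the sample sequence `Tp = T'` and update sequence
`Ts = T⋆`, with parameters `τ' > 0`, `τ⋆ > 0`, `τ° ∈ [0,τ⋆]`, `τ♮ ∈ [0, min τ° τ']`. -/
def AsyncBounds (Tp Ts : ℕ → ℝ) (τp τs τc τn : ℝ) : Prop :=
  0 < τp ∧ 0 < τs ∧ 0 ≤ τc ∧ τc ≤ τs ∧ 0 ≤ τn ∧ τn ≤ min τc τp ∧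
  (∀ k, Tp (k + 1) - Tp k ≤ τp) ∧
  (∀ k, Ts (k + 1) - Ts k ≤ τs) ∧
  (∀ k, phi Tp Ts k - Tp k ≤ τc) ∧
  (∀ k, phi Tp Ts k - Tp (lastIdx Tp (phi Tp Ts k)) ≤ τn)

/-- The asynchronous sample-and-hold perturbation `(Δ v)(t) = ∫_{t'_{q(t)}}^{t} v(x) dx`. -/
noncomputable def Delta (Tp Ts : ℕ → ℝ) (v : ℝ → ℝ) (t : ℝ) : ℝ :=
  ∫ x in (Tp (qIdx Tp Ts t))..t, v x

/-! ### Primitives of square integrable functions and Wirtinger's inequality -/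

/-- An `L²` function on a half-line is integrable on bounded intervals. -/
lemma intervalIntegrable_of_sq {v : ℝ → ℝ} (hv : Measurable v)
    (hv2 : IntegrableOn (fun x => v x ^ 2) (Set.Ioi 0)) {a b : ℝ} (ha : 0 ≤ a) (hb : 0 ≤ b) :
    IntervalIntegrable v volume a b := by
  have h : ∀ c, 0 ≤ c → IntervalIntegrable v volume 0 c := by
    intro c hc
    rw [intervalIntegrable_iff_integrableOn_Ioc_of_le hc]
    have h2 : MemLp v 2 (volume.restrict (Ioc 0 c)) :=
      (memLp_two_iff_integrable_sq hv.aestronglyMeasurable).2 (hv2.mono_set Ioc_subset_Ioi_self)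
    exact h2.integrable (by norm_num)
  exact (h a ha).symm.trans (h b hb)

lemma intervalIntegrable_sq {v : ℝ → ℝ}
    (hv2 : IntegrableOn (fun x => v x ^ 2) (Set.Ioi 0)) {a b : ℝ} (ha : 0 ≤ a) (hb : 0 ≤ b) :
    IntervalIntegrable (fun x => v x ^ 2) volume a b := by
  have h : ∀ c, 0 ≤ c → IntervalIntegrable (fun x => v x ^ 2) volume 0 c := by
    intro c hc
    rw [intervalIntegrable_iff_integrableOn_Ioc_of_le hc]
    exact hv2.mono_set Ioc_subset_Ioi_self
  exact (h a ha).symm.trans (h b hb)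

lemma continuousOn_primitive_of_le {v : ℝ → ℝ} {s a b : ℝ} (hsa : s ≤ a) (hab : a ≤ b)
    (hv : IntervalIntegrable v volume s b) :
    ContinuousOn (fun t => ∫ x in s..t, v x) (uIcc a b) := by
  refine (hv.absolutelyContinuousOnInterval_intervalIntegral (c := s) (by simp)).continuousOn.mono ?_
  rw [uIcc_of_le hab, uIcc_of_le (hsa.trans hab)]
  exact Icc_subset_Icc hsa le_rfl

/-- The fundamental theorem of calculus for `g z²` with `z` a primitive of the merely integrable
function `v`: `g z²` is absolutely continuous with a.e. derivative `g' z² + 2 g z v`. -/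
lemma integral_deriv_mul_primitive_sq {v g g' : ℝ → ℝ} {s a b : ℝ} (hsa : s ≤ a) (hab : a ≤ b)
    (hv : IntervalIntegrable v volume s b) (hg : ContDiffOn ℝ 1 g (uIcc a b))
    (hg' : ∀ t ∈ uIcc a b, HasDerivAt g (g' t) t) :
    ∫ t in a..b, (g' t * (∫ x in s..t, v x) ^ 2 + 2 * (g t * (∫ x in s..t, v x)) * v t) =
      g b * (∫ x in s..b, v x) ^ 2 - g a * (∫ x in s..a, v x) ^ 2 := by
  have hsub : uIcc a b ⊆ uIcc s b := by
    rw [uIcc_of_le hab, uIcc_of_le (hsa.trans hab)]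
    exact Icc_subset_Icc hsa le_rfl
  have hz := (hv.absolutelyContinuousOnInterval_intervalIntegral (c := s) (by simp)).mono hsub
  have hF := (hg.absolutelyContinuousOnInterval).fun_mul (hz.fun_mul hz)
  have key := hF.integral_deriv_eq_sub
  simp only [← pow_two] at key
  rw [← key]
  apply intervalIntegral.integral_congr_ae
  filter_upwards [hv.ae_hasDerivAt_integral] with t ht htab
  have ht' := uIoc_subset_uIcc htab
  have h1 := ht (hsub ht') s (by simp)
  have h2 := ((hg' t ht').mul (h1.pow 2)).deriv
  refine Eq.trans ?_ h2.symm
  simp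
  ring

/-- Cauchy–Schwarz against the constant function `1`. -/
lemma sq_integral_le {v : ℝ → ℝ} {s f : ℝ} (hsf : s ≤ f) (hv : IntervalIntegrable v volume s f)
    (hv2 : IntervalIntegrable (fun x => v x ^ 2) volume s f) :
    (∫ x in s..f, v x) ^ 2 ≤ (f - s) * ∫ x in s..f, v x ^ 2 := by
  rcases hsf.eq_or_lt with rfl | hlt
  · simp
  set I := ∫ x in s..f, v x with hI
  have h0 : 0 ≤ ∫ x in s..f, ((f - s) ^ 2 * v x ^ 2 - 2 * (f - s) * I * v x + I ^ 2) :=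
    intervalIntegral.integral_nonneg hsf fun x _ => by
      nlinarith [sq_nonneg ((f - s) * v x - I)]
  rw [intervalIntegral.integral_add ((hv2.const_mul _).sub (hv.const_mul _)) (by simp),
    intervalIntegral.integral_sub (hv2.const_mul _) (hv.const_mul _),
    intervalIntegral.integral_const_mul, intervalIntegral.integral_const_mul,
    intervalIntegral.integral_const, ← hI, smul_eq_mul] at h0
  have h1 : 0 ≤ (f - s) * ((f - s) * (∫ x in s..f, v x ^ 2) - I ^ 2) := by linarith
  have := nonneg_of_mul_nonneg_right h1 (sub_pos.2 hlt)
  linarith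

/-- Wirtinger's inequality at a frequency `c` strictly below the critical `π / (2 (b - a))`. With
`g t = c tan (c (b - t))` one has `g' + g² = -c²`, so `c² z² + (g z²)' = v² - (v - g z)² ≤ v²`,
while `g z²` vanishes at both ends. -/
lemma wirtinger_aux {v : ℝ → ℝ} {a b c : ℝ} (hab : a ≤ b) (hc : 0 ≤ c)
    (hcb : c * (b - a) < Real.pi / 2)
    (hv : IntervalIntegrable v volume a b)
    (hv2 : IntervalIntegrable (fun x => v x ^ 2) volume a b) :
    c ^ 2 * ∫ t in a..b, (∫ x in a..t, v x) ^ 2 ≤ ∫ t in a..b, v t ^ 2 := by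
  have hcos : ∀ t ∈ uIcc a b, Real.cos (c * (b - t)) ≠ 0 := by
    intro t ht
    rw [uIcc_of_le hab] at ht
    refine (Real.cos_pos_of_mem_Ioo ⟨?_, ?_⟩).ne'
    · have : 0 ≤ c * (b - t) := mul_nonneg hc (by linarith [ht.2])
      linarith [Real.pi_pos]
    · have : c * (b - t) ≤ c * (b - a) := mul_le_mul_of_nonneg_left (by linarith [ht.1]) hc
      linarith
  set g : ℝ → ℝ := fun t => c * Real.tan (c * (b - t)) with hg
  have hgC : ContDiffOn ℝ 1 g (uIcc a b) := by
    intro t ht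
    refine ContDiffAt.contDiffWithinAt ?_
    refine contDiffAt_const.mul ?_
    exact (Real.contDiffAt_tan.2 (hcos t ht)).comp (f := fun t => c * (b - t)) t (by fun_prop)
  have hgD : ∀ t ∈ uIcc a b, HasDerivAt g (-c ^ 2 - g t ^ 2) t := by
    intro t ht
    have h1 : HasDerivAt (fun t => c * (b - t)) (c * (-1)) t :=
      ((hasDerivAt_id t).const_sub b).const_mul c
    have h2 := ((Real.hasDerivAt_tan (hcos t ht)).comp t h1).const_mul c
    refine h2.congr_deriv ?_
    have h3 := hcos t ht
    simp only [hg, Real.tan_eq_sin_div_cos]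
    field_simp
    have := Real.sin_sq_add_cos_sq (c * (b - t))
    linear_combination (c ^ 2) * this
  have key := integral_deriv_mul_primitive_sq le_rfl hab hv hgC hgD
  have hz := continuousOn_primitive_of_le le_rfl hab hv
  have hgc := hgC.continuousOn
  have i1 : IntervalIntegrable (fun t => c ^ 2 * (∫ x in a..t, v x) ^ 2) volume a b :=
    ((hz.pow 2).intervalIntegrable).const_mul _
  have i2 : IntervalIntegrable (fun t => (-c ^ 2 - g t ^ 2) * (∫ x in a..t, v x) ^ 2 +
      2 * (g t * (∫ x in a..t, v x)) * v t) volume a b := by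
    refine IntervalIntegrable.add ?_ ?_
    · exact ((continuousOn_const.sub (hgc.pow 2)).mul (hz.pow 2)).intervalIntegrable
    · exact hv.continuousOn_mul (continuousOn_const.mul (hgc.mul hz))
  have h := intervalIntegral.integral_mono_on hab (i1.add i2) hv2 (fun t _ => by
    nlinarith [sq_nonneg (v t - g t * ∫ x in a..t, v x)])
  rw [intervalIntegral.integral_add i1 i2, key, intervalIntegral.integral_const_mul] at h
  simpa [hg] using h

/-- Wirtinger's inequality with one free end, for the primitive of an `L²` function. -/
lemma wirtinger {v : ℝ → ℝ} {a b L : ℝ} (hab : a ≤ b) (hL : 0 < L) (hbL : b - a ≤ L)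
    (hv : IntervalIntegrable v volume a b)
    (hv2 : IntervalIntegrable (fun x => v x ^ 2) volume a b) :
    ∫ t in a..b, (∫ x in a..t, v x) ^ 2 ≤ (2 * L / Real.pi) ^ 2 * ∫ t in a..b, v t ^ 2 := by
  have hpi := Real.pi_pos
  set W := ∫ t in a..b, (∫ x in a..t, v x) ^ 2
  set V := ∫ t in a..b, v t ^ 2
  have h : ∀ r ∈ Ioo (0 : ℝ) 1, r ^ 2 * W ≤ (2 * L / Real.pi) ^ 2 * V := by
    intro r hr
    have h1 := wirtinger_aux (c := r * (Real.pi / (2 * L))) hab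
      (mul_nonneg hr.1.le (by positivity)) (by
        calc r * (Real.pi / (2 * L)) * (b - a) ≤ r * (Real.pi / (2 * L)) * L :=
              mul_le_mul_of_nonneg_left hbL (mul_nonneg hr.1.le (by positivity))
          _ = r * (Real.pi / 2) := by field_simp
          _ < Real.pi / 2 := by nlinarith [hr.2]) hv hv2
    have h2 := mul_le_mul_of_nonneg_left h1 (sq_nonneg (2 * L / Real.pi))
    refine le_trans (le_of_eq ?_) h2
    field_simp
    rfl
  have hlim : Tendsto (fun r : ℝ => r ^ 2 * W) (nhdsWithin 1 (Iio 1)) (nhds (1 ^ 2 * W)) :=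
    ((continuous_pow 2).mul continuous_const).continuousAt.tendsto.mono_left nhdsWithin_le_nhds
  have := le_of_tendsto hlim (by
    filter_upwards [Ioo_mem_nhdsLT (zero_lt_one' ℝ)] with r hr using h r hr)
  simpa using this

/-! ### Estimates on a single hold interval -/

/-- Energy gain of the held integral on a single hold interval `[a, b]` with sample time `s`. The
weights `A = 2 L / π` and `B = √(L τn)` bound the gains of `∫_a^t v` and of the constant `∫_s^a v`;
the integrals of `v²` over `[a, b]` and `[s, a]` stay separate so that the bounds add up over
successive intervals. -/
lemma piece_gain {v : ℝ → ℝ} {s a b L τn : ℝ} (hsa : s ≤ a) (hab : a ≤ b) (hL : 0 < L)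
    (hbL : b - s ≤ L) (hn : a - s ≤ τn)
    (hv : IntervalIntegrable v volume s b)
    (hv2 : IntervalIntegrable (fun x => v x ^ 2) volume s b) :
    ∫ t in a..b, (∫ x in s..t, v x) ^ 2 ≤
      (2 * L / Real.pi + Real.sqrt (L * τn)) * (2 * L / Real.pi * (∫ t in a..b, v t ^ 2) +
        Real.sqrt (L * τn) * ∫ t in s..a, v t ^ 2) := by
  have hmem : a ∈ uIcc s b := by rw [uIcc_of_le (hsa.trans hab)]; exact ⟨hsa, hab⟩
  have hsub1 : uIcc s a ⊆ uIcc s b := uIcc_subset_uIcc_left hmem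
  have hsub2 : uIcc a b ⊆ uIcc s b := uIcc_subset_uIcc_right hmem
  have hvs := hv.mono_set hsub1
  have hva := hv.mono_set hsub2
  have hW := wirtinger hab hL (by linarith) hva (hv2.mono_set hsub2)
  have hI := sq_integral_le hsa hvs (hv2.mono_set hsub1)
  have hV0 : 0 ≤ ∫ t in s..a, v t ^ 2 :=
    intervalIntegral.integral_nonneg hsa fun _ _ => sq_nonneg _
  set A := 2 * L / Real.pi with hA
  set B := Real.sqrt (L * τn) with hB
  set V1 := ∫ t in a..b, v t ^ 2
  set V0 := ∫ t in s..a, v t ^ 2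
  set I := ∫ x in s..a, v x with hIdef
  have hApos : 0 < A := div_pos (by linarith) Real.pi_pos
  have hτ : 0 ≤ τn := by linarith
  have hB2 : B ^ 2 = L * τn := Real.sq_sqrt (by positivity)
  have hB0 : 0 ≤ B := Real.sqrt_nonneg _
  have hzw : ∀ t ∈ uIcc a b, (∫ x in s..t, v x) = I + ∫ x in a..t, v x := fun t ht =>
    (intervalIntegral.integral_add_adjacent_intervals hvs
      (hva.mono_set (uIcc_subset_uIcc_left ht))).symm
  have hI' : (b - a) * I ^ 2 ≤ B ^ 2 * V0 := by
    have h1 : I ^ 2 ≤ τn * V0 := hI.trans (mul_le_mul_of_nonneg_right hn hV0)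
    calc (b - a) * I ^ 2 ≤ L * (τn * V0) :=
          mul_le_mul (by linarith) h1 (sq_nonneg _) hL.le
      _ = B ^ 2 * V0 := by rw [hB2]; ring
  have hzc := continuousOn_primitive_of_le hsa hab hv
  have hwc := continuousOn_primitive_of_le le_rfl hab hva
  rcases hB0.eq_or_lt with hBz | hBpos
  · -- Here `τn = 0`, so the sample and the update coincide and the constant part vanishes.
    have hτz : τn = 0 := by
      rw [← hBz] at hB2
      rcases mul_eq_zero.1 (hB2.symm.trans (by norm_num)) with h | h
      · exact absurd h hL.ne'
      · exact h
    have hsa' : s = a := by linarith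
    subst hsa'
    rw [← hBz]
    calc _ ≤ A ^ 2 * V1 := hW
      _ = _ := by ring
  · have i1 : IntervalIntegrable (fun t => (1 + B / A) * (∫ x in a..t, v x) ^ 2) volume a b :=
      ((hwc.pow 2).intervalIntegrable).const_mul _
    have hle : ∫ t in a..b, (∫ x in s..t, v x) ^ 2 ≤
        ∫ t in a..b, ((1 + B / A) * (∫ x in a..t, v x) ^ 2 + (1 + A / B) * I ^ 2) := by
      refine intervalIntegral.integral_mono_on hab (hzc.pow 2).intervalIntegrable
        (i1.add (by simp)) fun t ht => ?_
      rw [hzw t (by rwa [uIcc_of_le hab])]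
      set w := ∫ x in a..t, v x
      -- Young's inequality, with the ratio of weights that makes the two bounds recombine.
      have h2 : (1 + B / A) * w ^ 2 + (1 + A / B) * I ^ 2 - (I + w) ^ 2 =
          (B * w - A * I) ^ 2 / (A * B) := by
        field_simp
        ring
      have h3 : 0 ≤ (B * w - A * I) ^ 2 / (A * B) := by positivity
      linarith
    rw [intervalIntegral.integral_add i1 (by simp), intervalIntegral.integral_const_mul,
      intervalIntegral.integral_const, smul_eq_mul] at hle
    have h4 : (1 + B / A) * (∫ t in a..b, (∫ x in a..t, v x) ^ 2) ≤
        (1 + B / A) * (A ^ 2 * V1) := mul_le_mul_of_nonneg_left hW (by positivity)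
    have h5 : (1 + A / B) * ((b - a) * I ^ 2) ≤ (1 + A / B) * (B ^ 2 * V0) :=
      mul_le_mul_of_nonneg_left hI' (by positivity)
    calc _ ≤ (1 + B / A) * (A ^ 2 * V1) + (1 + A / B) * (B ^ 2 * V0) := by linarith
      _ = _ := by field_simp; ring

/-- Supply rate on a single hold interval: `2 ∫ z v` is the increment of `z²`, and the only
negative contribution, `z(a)²`, is controlled by the delay `a - s`. -/
lemma piece_passive {v : ℝ → ℝ} {s a b τn : ℝ} (hsa : s ≤ a) (hab : a ≤ b) (hn : a - s ≤ τn)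
    (hv : IntervalIntegrable v volume s b)
    (hv2 : IntervalIntegrable (fun x => v x ^ 2) volume s b) :
    -(τn * ∫ t in s..a, v t ^ 2) ≤ 2 * ∫ t in a..b, (∫ x in s..t, v x) * v t := by
  have hmem : a ∈ uIcc s b := by rw [uIcc_of_le (hsa.trans hab)]; exact ⟨hsa, hab⟩
  have hsub1 : uIcc s a ⊆ uIcc s b := uIcc_subset_uIcc_left hmem
  have hI := sq_integral_le hsa (hv.mono_set hsub1) (hv2.mono_set hsub1)
  have hV0 : 0 ≤ ∫ t in s..a, v t ^ 2 :=
    intervalIntegral.integral_nonneg hsa fun _ _ => sq_nonneg _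
  have key := integral_deriv_mul_primitive_sq (g := fun _ => 1) (g' := fun _ => 0) hsa hab hv
    contDiffOn_const (fun t _ => hasDerivAt_const t 1)
  have h2 : 2 * ∫ t in a..b, (∫ x in s..t, v x) * v t =
      (∫ x in s..b, v x) ^ 2 - (∫ x in s..a, v x) ^ 2 := by
    rw [← intervalIntegral.integral_const_mul]
    simpa [mul_assoc] using key
  have := mul_le_mul_of_nonneg_right hn hV0
  nlinarith [sq_nonneg (∫ x in s..b, v x)]

/-! ### Summation over hold intervals -/

/-- A hold pattern: on `[F i, F (i + 1))` the value sampled at time `S i` is held. A sample comes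
into use with delay at most `τn` and is at most `L` old when it is replaced, and the next sample
is taken no earlier than `F i`, so the windows `[S i, F i]` do not overlap. -/
structure HoldPattern (S F : ℕ → ℝ) (L τn : ℝ) : Prop where
  F_zero : F 0 = 0
  S_zero : S 0 = 0
  S_le_F : ∀ i, S i ≤ F i
  F_le_S : ∀ i, F i ≤ S (i + 1)
  delay : ∀ i, F i - S i ≤ τn
  hold : ∀ i, F (i + 1) - S i ≤ L
  tendsto : Tendsto F atTop atTop

namespace HoldPattern

variable {S F : ℕ → ℝ} {L τn : ℝ} {v y : ℝ → ℝ}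

lemma F_le_succ (h : HoldPattern S F L τn) (i : ℕ) : F i ≤ F (i + 1) :=
  (h.F_le_S i).trans (h.S_le_F (i + 1))

lemma F_nonneg (h : HoldPattern S F L τn) (i : ℕ) : 0 ≤ F i := by
  rw [← h.F_zero]
  exact monotone_nat_of_le_succ h.F_le_succ (Nat.zero_le i)

lemma S_nonneg (h : HoldPattern S F L τn) : ∀ i, 0 ≤ S i
  | 0 => h.S_zero.ge
  | i + 1 => (h.F_nonneg i).trans (h.F_le_S i)

/-- The window `[S i, F i]` lies in `[S i, S (i + 1)]`: its energy is paid for by the increment of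
the energy of `v` up to sampling times. -/
lemma energy_S_step (h : HoldPattern S F L τn)
    (hv2 : IntegrableOn (fun x => v x ^ 2) (Set.Ioi 0)) (i : ℕ) :
    (∫ t in (0 : ℝ)..(S i), v t ^ 2) + ∫ t in (S i)..(F i), v t ^ 2 ≤
      ∫ t in (0 : ℝ)..(S (i + 1)), v t ^ 2 := by
  have hi : ∀ {a b : ℝ}, 0 ≤ a → 0 ≤ b → IntervalIntegrable (fun x => v x ^ 2) volume a b :=
    fun ha hb => intervalIntegrable_sq hv2 ha hb
  have hS := h.S_nonneg i
  have hS' := h.S_nonneg (i + 1)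
  have hF := h.F_nonneg i
  have h1 : 0 ≤ ∫ t in (F i)..(S (i + 1)), v t ^ 2 :=
    intervalIntegral.integral_nonneg (h.F_le_S i) fun _ _ => sq_nonneg _
  rw [intervalIntegral.integral_add_adjacent_intervals (hi le_rfl hS) (hi hS hF),
    ← intervalIntegral.integral_add_adjacent_intervals (hi le_rfl hF) (hi hF hS')]
  linarith

lemma energy_S_le (h : HoldPattern S F L τn)
    (hv2 : IntegrableOn (fun x => v x ^ 2) (Set.Ioi 0)) (i : ℕ) :
    ∫ t in (0 : ℝ)..(S i), v t ^ 2 ≤ ∫ t in Set.Ioi (0 : ℝ), v t ^ 2 := by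
  rw [intervalIntegral.integral_of_le (h.S_nonneg i)]
  exact setIntegral_mono_set hv2 (ae_of_all _ fun _ => sq_nonneg _)
    (LE.le.eventuallyLE Ioc_subset_Ioi_self)

lemma energy_F_le (h : HoldPattern S F L τn)
    (hv2 : IntegrableOn (fun x => v x ^ 2) (Set.Ioi 0)) (i : ℕ) :
    ∫ t in (0 : ℝ)..(F i), v t ^ 2 ≤ ∫ t in Set.Ioi (0 : ℝ), v t ^ 2 := by
  rw [intervalIntegral.integral_of_le (h.F_nonneg i)]
  exact setIntegral_mono_set hv2 (ae_of_all _ fun _ => sq_nonneg _)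
    (LE.le.eventuallyLE Ioc_subset_Ioi_self)

lemma gain_partial (h : HoldPattern S F L τn) (hL : 0 < L) (hv : Measurable v)
    (hv2 : IntegrableOn (fun x => v x ^ 2) (Set.Ioi 0))
    (hy : ∀ i, ∀ t ∈ Ioo (F i) (F (i + 1)), y t = ∫ x in (S i)..t, v x)
    (hy2 : IntegrableOn (fun x => y x ^ 2) (Set.Ioi 0)) (i : ℕ) :
    ∫ t in (0 : ℝ)..(F i), y t ^ 2 ≤
      (2 * L / Real.pi + Real.sqrt (L * τn)) *
        (2 * L / Real.pi * (∫ t in (0 : ℝ)..(F i), v t ^ 2) +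
          Real.sqrt (L * τn) * ∫ t in (0 : ℝ)..(S i), v t ^ 2) := by
  induction i with
  | zero => simp [h.F_zero, h.S_zero]
  | succ i ih =>
    have hS := h.S_nonneg i
    have hF := h.F_nonneg i
    have hF' := h.F_nonneg (i + 1)
    have hp := piece_gain (h.S_le_F i) (h.F_le_succ i) hL (h.hold i) (h.delay i)
      (intervalIntegrable_of_sq hv hv2 hS hF') (intervalIntegrable_sq hv2 hS hF')
    have hc : ∫ t in (F i)..(F (i + 1)), y t ^ 2 =
        ∫ t in (F i)..(F (i + 1)), (∫ x in (S i)..t, v x) ^ 2 :=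
      intervalIntegral.integral_congr_Ioo_of_le (h.F_le_succ i) fun t ht => by
        simp only [hy i t ht]
    rw [← intervalIntegral.integral_add_adjacent_intervals
        (intervalIntegrable_sq hy2 le_rfl hF) (intervalIntegrable_sq hy2 hF hF'),
      ← intervalIntegral.integral_add_adjacent_intervals
        (intervalIntegrable_sq hv2 le_rfl hF) (intervalIntegrable_sq hv2 hF hF'), hc]
    have hA : 0 ≤ 2 * L / Real.pi := div_nonneg (by linarith) Real.pi_pos.le
    have hB := Real.sqrt_nonneg (L * τn)
    have hs := mul_le_mul_of_nonneg_left (h.energy_S_step hv2 i)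
      (mul_nonneg (add_nonneg hA hB) hB)
    nlinarith

lemma passive_partial (h : HoldPattern S F L τn) (hv : Measurable v)
    (hv2 : IntegrableOn (fun x => v x ^ 2) (Set.Ioi 0))
    (hy : ∀ i, ∀ t ∈ Ioo (F i) (F (i + 1)), y t = ∫ x in (S i)..t, v x)
    (hyv : IntegrableOn (fun x => y x * v x) (Set.Ioi 0)) (i : ℕ) :
    -(τn * ∫ t in (0 : ℝ)..(S i), v t ^ 2) ≤ 2 * ∫ t in (0 : ℝ)..(F i), y t * v t := by
  induction i with
  | zero => simp [h.F_zero, h.S_zero]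
  | succ i ih =>
    have hS := h.S_nonneg i
    have hF := h.F_nonneg i
    have hF' := h.F_nonneg (i + 1)
    have hp := piece_passive (h.S_le_F i) (h.F_le_succ i) (h.delay i)
      (intervalIntegrable_of_sq hv hv2 hS hF') (intervalIntegrable_sq hv2 hS hF')
    have hc : ∫ t in (F i)..(F (i + 1)), y t * v t =
        ∫ t in (F i)..(F (i + 1)), (∫ x in (S i)..t, v x) * v t :=
      intervalIntegral.integral_congr_Ioo_of_le (h.F_le_succ i) fun t ht => by
        simp only [hy i t ht]
    have hii : ∀ {a b : ℝ}, 0 ≤ a → a ≤ b →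
        IntervalIntegrable (fun x => y x * v x) volume a b := fun ha hab => by
      rw [intervalIntegrable_iff_integrableOn_Ioc_of_le hab]
      exact hyv.mono_set fun x hx => lt_of_le_of_lt ha hx.1
    rw [← intervalIntegral.integral_add_adjacent_intervals (hii le_rfl hF)
      (hii hF (h.F_le_succ i)), hc]
    have hτ : 0 ≤ τn := by linarith [h.S_le_F i, h.delay i]
    have hs := mul_le_mul_of_nonneg_left (h.energy_S_step hv2 i) hτ
    nlinarith

/-- The `L²` gain. If `y` is not square integrable the left-hand integral is `0` by convention and
the bound still holds, so no integrability of `y` is assumed. -/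
lemma gain (h : HoldPattern S F L τn) (hL : 0 < L) (hv : Measurable v)
    (hv2 : IntegrableOn (fun x => v x ^ 2) (Set.Ioi 0))
    (hy : ∀ i, ∀ t ∈ Ioo (F i) (F (i + 1)), y t = ∫ x in (S i)..t, v x) :
    ∫ t in Set.Ioi (0 : ℝ), y t ^ 2 ≤
      (2 * L / Real.pi + Real.sqrt (L * τn)) ^ 2 * ∫ t in Set.Ioi (0 : ℝ), v t ^ 2 := by
  have hV : 0 ≤ ∫ t in Set.Ioi (0 : ℝ), v t ^ 2 := integral_nonneg fun _ => sq_nonneg _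
  by_cases hy2 : IntegrableOn (fun x => y x ^ 2) (Set.Ioi 0)
  · refine le_of_tendsto (intervalIntegral_tendsto_integral_Ioi 0 hy2 h.tendsto)
      (Eventually.of_forall fun i => (h.gain_partial hL hv hv2 hy hy2 i).trans ?_)
    have hA : 0 ≤ 2 * L / Real.pi := div_nonneg (by linarith) Real.pi_pos.le
    have hB := Real.sqrt_nonneg (L * τn)
    calc _ ≤ (2 * L / Real.pi + Real.sqrt (L * τn)) *
          (2 * L / Real.pi * (∫ t in Set.Ioi (0 : ℝ), v t ^ 2) +
            Real.sqrt (L * τn) * ∫ t in Set.Ioi (0 : ℝ), v t ^ 2) := by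
          gcongr
          · exact h.energy_F_le hv2 i
          · exact h.energy_S_le hv2 i
      _ = _ := by ring
  · rw [integral_undef hy2]
    positivity

/-- Passivity up to a shortage `τn / 2`. As in `gain`, a non-integrable product integrates to `0`
and satisfies the bound. -/
lemma passive (h : HoldPattern S F L τn) (hv : Measurable v)
    (hv2 : IntegrableOn (fun x => v x ^ 2) (Set.Ioi 0))
    (hy : ∀ i, ∀ t ∈ Ioo (F i) (F (i + 1)), y t = ∫ x in (S i)..t, v x) :
    -(τn * ∫ t in Set.Ioi (0 : ℝ), v t ^ 2) ≤ 2 * ∫ t in Set.Ioi (0 : ℝ), y t * v t := by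
  have hV : 0 ≤ ∫ t in Set.Ioi (0 : ℝ), v t ^ 2 := integral_nonneg fun _ => sq_nonneg _
  have hτ : 0 ≤ τn := by linarith [h.S_le_F 0, h.delay 0]
  by_cases hyv : IntegrableOn (fun x => y x * v x) (Set.Ioi 0)
  · refine ge_of_tendsto
      ((intervalIntegral_tendsto_integral_Ioi 0 hyv h.tendsto).const_mul 2)
      (Eventually.of_forall fun i => le_trans ?_ (h.passive_partial hv hv2 hy hyv i))
    exact neg_le_neg (mul_le_mul_of_nonneg_left (h.energy_S_le hv2 i) hτ)
  · rw [integral_undef hyv, mul_zero]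
    exact neg_nonpos.2 (mul_nonneg hτ hV)

end HoldPattern

/-! ### The hold pattern of two event sequences -/

namespace Admissible

variable {T : ℕ → ℝ}

lemma strictMono (h : Admissible T) : StrictMono T := strictMono_nat_of_lt_succ h.2.1

lemma nonneg (h : Admissible T) (k : ℕ) : 0 ≤ T k := by
  rw [← h.1]
  exact h.strictMono.monotone (Nat.zero_le k)

lemma lastIdx_eq (h : Admissible T) {t : ℝ} {k : ℕ} (h1 : T k ≤ t) (h2 : t < T (k + 1)) :
    lastIdx T t = k := by
  refine IsGreatest.csSup_eq ⟨h1, fun j hj => ?_⟩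
  exact Nat.lt_succ_iff.1 (h.strictMono.lt_iff_lt.1 (lt_of_le_of_lt hj h2))

lemma lastIdx_spec (h : Admissible T) {t : ℝ} (ht : 0 ≤ t) :
    T (lastIdx T t) ≤ t ∧ t < T (lastIdx T t + 1) := by
  obtain ⟨N, hN⟩ := (h.2.2.eventually_gt_atTop t).exists
  have hbdd : BddAbove {k | T k ≤ t} :=
    ⟨N, fun j hj => (h.strictMono.lt_iff_lt.1 (lt_of_le_of_lt hj hN)).le⟩
  refine ⟨Nat.sSup_mem ⟨0, by simpa [h.1] using ht⟩ hbdd, ?_⟩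
  by_contra hc
  exact absurd (le_csSup hbdd (not_lt.1 hc)) (by simp [lastIdx])

end Admissible

/-- Indices of the samples that are ever held, in order: sample `heldIdx (i + 1)` is the most
recent one at the first hold update at or after sample number `heldIdx i + 1`. -/
noncomputable def heldIdx (Tp Ts : ℕ → ℝ) : ℕ → ℕ
  | 0 => 0
  | i + 1 => lastIdx Tp (phi Tp Ts (heldIdx Tp Ts i + 1))

/-- The hold update at which sample `heldIdx i` comes into use. -/
noncomputable def heldTime (Tp Ts : ℕ → ℝ) : ℕ → ℝ
  | 0 => 0
  | i + 1 => phi Tp Ts (heldIdx Tp Ts i + 1)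

section Held

variable {Tp Ts : ℕ → ℝ}

lemma le_phi (hTs : Admissible Ts) (k : ℕ) : Tp k ≤ phi Tp Ts k :=
  Nat.sInf_mem (s := {j | Tp k ≤ Ts j}) (hTs.2.2.eventually_ge_atTop (Tp k)).exists

lemma phi_le (hTs : Admissible Ts) {k j : ℕ} (h : Tp k ≤ Ts j) : phi Tp Ts k ≤ Ts j :=
  hTs.strictMono.monotone (Nat.sInf_le h)

lemma heldTime_nonneg (hTs : Admissible Ts) : ∀ i, 0 ≤ heldTime Tp Ts i
  | 0 => le_rfl
  | _ + 1 => hTs.nonneg _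

lemma heldTime_mem_range (hTs : Admissible Ts) : ∀ i, ∃ m, heldTime Tp Ts i = Ts m
  | 0 => ⟨0, hTs.1.symm⟩
  | _ + 1 => ⟨_, rfl⟩

lemma heldIdx_eq (hTp : Admissible Tp) :
    ∀ i, heldIdx Tp Ts i = lastIdx Tp (heldTime Tp Ts i)
  | 0 => (hTp.lastIdx_eq hTp.1.le (by
      rw [← hTp.1]; exact hTp.2.1 0)).symm
  | _ + 1 => rfl

lemma held_spec (hTp : Admissible Tp) (hTs : Admissible Ts) (i : ℕ) :
    Tp (heldIdx Tp Ts i) ≤ heldTime Tp Ts i ∧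
      heldTime Tp Ts i < Tp (heldIdx Tp Ts i + 1) := by
  rw [heldIdx_eq hTp]
  exact hTp.lastIdx_spec (heldTime_nonneg hTs i)

lemma heldIdx_lt_succ (hTp : Admissible Tp) (hTs : Admissible Ts) (i : ℕ) :
    heldIdx Tp Ts i < heldIdx Tp Ts (i + 1) := by
  have h1 : Tp (heldIdx Tp Ts i + 1) ≤ heldTime Tp Ts (i + 1) := le_phi hTs _
  have h2 := (held_spec hTp hTs (i + 1)).2
  have := hTp.strictMono.lt_iff_lt.1 (lt_of_le_of_lt h1 h2)
  omega

lemma holdPattern (hTp : Admissible Tp) (hTs : Admissible Ts) {τp τs τc τn : ℝ}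
    (hb : AsyncBounds Tp Ts τp τs τc τn) :
    HoldPattern (fun i => Tp (heldIdx Tp Ts i)) (heldTime Tp Ts) (τp + τc) τn := by
  obtain ⟨-, -, -, -, hn, -, hp, -, hc, hd⟩ := hb
  refine ⟨rfl, hTp.1, fun i => (held_spec hTp hTs i).1, fun i => ?_, fun i => ?_, fun i => ?_, ?_⟩
  · exact (held_spec hTp hTs i).2.le.trans
      (hTp.strictMono.monotone (heldIdx_lt_succ hTp hTs i))
  · cases i with
    | zero => simpa [heldTime, heldIdx, hTp.1] using hn
    | succ i => exact hd _
  · have h1 := hp (heldIdx Tp Ts i)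
    have h2 := hc (heldIdx Tp Ts i + 1)
    simp only [heldTime]
    linarith
  · have hm : StrictMono (heldIdx Tp Ts) := strictMono_nat_of_lt_succ (heldIdx_lt_succ hTp hTs)
    exact tendsto_atTop_mono (fun i => (held_spec hTp hTs i).1)
      (hTp.2.2.comp hm.tendsto_atTop)

/-- No update in `[heldTime i, heldTime (i + 1))` sees a sample later than `heldIdx i`, because
`heldTime (i + 1)` is the first update at or after sample `heldIdx i + 1`. -/
lemma qIdx_eq (hTp : Admissible Tp) (hTs : Admissible Ts) {i : ℕ} {t : ℝ}
    (ht : t ∈ Ioo (heldTime Tp Ts i) (heldTime Tp Ts (i + 1))) :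
    qIdx Tp Ts t = heldIdx Tp Ts i := by
  have hsp := hTs.lastIdx_spec ((heldTime_nonneg hTs i).trans ht.1.le)
  have hk := held_spec hTp hTs i
  obtain ⟨m, hm⟩ := heldTime_mem_range (Tp := Tp) hTs i
  refine hTp.lastIdx_eq ?_ ?_
  · refine hk.1.trans ?_
    rw [hm]
    refine hTs.strictMono.monotone (Nat.lt_succ_iff.1 (hTs.strictMono.lt_iff_lt.1 ?_))
    exact lt_trans (hm ▸ ht.1) hsp.2
  · by_contra hc
    have : heldTime Tp Ts (i + 1) ≤ Ts (lastIdx Ts t) := phi_le hTs (not_lt.1 hc)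
    linarith [ht.2, hsp.1]

end Held

/-- Scaled IQC family: for every `α ∈ [0,1]`, the operator `αΔ` satisfies the same IQCs:
`(βX + τ♮Y)‖v‖² + 2Y⟨αΔv,v⟩ − X‖αΔv‖² ≥ 0` for all `X, Y ≥ 0`, `v ∈ L²([0,∞))`. -/
theorem stmt11 (Tp Ts : ℕ → ℝ) (hTp : Admissible Tp) (hTs : Admissible Ts)
    (τp τs τc τn : ℝ) (hb : AsyncBounds Tp Ts τp τs τc τn)
    (β : ℝ)
    (hβ : β = (2 * (τp + τc) / Real.pi + Real.sqrt ((τp + τc) * τn)) ^ 2)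
    (α : ℝ) (hα : α ∈ Set.Icc (0 : ℝ) 1)
    (X Y : ℝ) (hX : 0 ≤ X) (hY : 0 ≤ Y)
    (v : ℝ → ℝ) (hv : Measurable v)
    (hv2 : IntegrableOn (fun x => v x ^ 2) (Set.Ioi 0)) :
    0 ≤ (β * X + τn * Y) * (∫ t in Set.Ioi (0 : ℝ), v t ^ 2) +
        2 * Y * (∫ t in Set.Ioi (0 : ℝ), (α * Delta Tp Ts v t) * v t) -
        X * ∫ t in Set.Ioi (0 : ℝ), (α * Delta Tp Ts v t) ^ 2 := by
  have hP := holdPattern hTp hTs hb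
  have hL : 0 < τp + τc := add_pos_of_pos_of_nonneg hb.1 hb.2.2.1
  have hτ : 0 ≤ τn := hb.2.2.2.2.1
  have hy : ∀ i, ∀ t ∈ Ioo (heldTime Tp Ts i) (heldTime Tp Ts (i + 1)),
      Delta Tp Ts v t = ∫ x in (Tp (heldIdx Tp Ts i))..t, v x := fun i t ht => by
    rw [Delta, qIdx_eq hTp hTs ht]
  have hg := hP.gain hL hv hv2 hy
  have hp := hP.passive hv hv2 hy
  have hV : 0 ≤ ∫ t in Set.Ioi (0 : ℝ), v t ^ 2 := integral_nonneg fun _ => sq_nonneg _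
  have hD : 0 ≤ ∫ t in Set.Ioi (0 : ℝ), Delta Tp Ts v t ^ 2 :=
    integral_nonneg fun _ => sq_nonneg _
  rw [← hβ] at hg
  simp only [mul_pow, mul_assoc, integral_const_mul]
  set V := ∫ t in Set.Ioi (0 : ℝ), v t ^ 2
  set D := ∫ t in Set.Ioi (0 : ℝ), Delta Tp Ts v t ^ 2
  set G := ∫ t in Set.Ioi (0 : ℝ), Delta Tp Ts v t * v t
  have h1 : 0 ≤ X * (β * V - α ^ 2 * D) := by
    refine mul_nonneg hX ?_
    have : α ^ 2 * D ≤ 1 * D :=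
      mul_le_mul_of_nonneg_right (pow_le_one₀ hα.1 hα.2) hD
    linarith
  have h2 : 0 ≤ Y * (τn * V + α * (2 * G)) := by
    refine mul_nonneg hY ?_
    have ha := mul_le_mul_of_nonneg_left hp hα.1
    have hb' := mul_le_mul_of_nonneg_right hα.2 (mul_nonneg hτ hV)
    linarith
  linarith
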